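/- Partial comparison principle for viscosity solutions (Proposition 3.5): Under the standing assumptions, let ε∈[0,ε₀] and ε'∈(ε,ε₀]. Let U:[0,T]×ℝ→ℝ be upper semicontinuous with linear growth and a viscosity subsolution of (Eq_ε) on [0,T)×ℝ, and let V:[0,T]×ℝ→ℝ be lower semicontinuous with linear growth and a viscosity supersolution of (Eq_{ε'}) on [0,T)×ℝ. If U(T,x)≤V(T,x) for all x∈ℝ, then U(t,x)≤V(t,x) for all (t,x)∈[0,T]×ℝ. -/

import Mathlib

/-!
A positive maximum of `U - V` is excluded by doubling the variables. The subtraction of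
`η (T - t) + δ x²` from `U` makes the subsolution inequality strict and the supremum of
`W₁(s,y) + W₂(s',y') - n/2 ((s-s')² + (y-y')²)`, with `W₂ = -V`, attained; for large `n` the
maximum point `(s₁, y₁, s₂, y₂)` lies before the terminal time and its two halves are as close as
desired (`exists_doubling_max`).

At such a point second-order jets of `W₁` and `W₂` with opposite time derivatives and opposite
curvatures `κ`, `-κ` are needed (`exists_common_curvature`). In one space dimension this requires
neither Alexandrov's nor Jensen's theorem. Freeze the time of the sup-convolutions `f₁`, `f₂` of
`W₁`, `W₂` at the midpoint `t = (s₁+s₂)/2`; then `f₁ + f₂`, as a function of `x` alone, is maximal,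
with value `m`, at the midpoint `z` of `y₁` and `y₂`. For any `κ`, consider the parabola with second
derivative `κ` that agrees with `m - f₂` at `z ± h`. At `z` its value is either at most that of
`f₁`, and then `f₁` minus the parabola has an interior local maximum, or at least that of `m - f₂`,
and then `m - f₂` minus the parabola has an interior local minimum. So, letting `h → 0`, every `κ` is
an admissible limiting curvature for `W₁` or for `W₂` (`touch_dichotomy`). The two sets of admissible
curvatures are closed and nonempty and cover `ℝ`, so by connectedness they intersect.

A common curvature yields two nearby points `(s,y,q)` and `(s',y',q')` at which `-a + η - F̄`
is nonpositive or `F ≥ 1/ε`, respectively `-a - F̄` is nonnegative and `F ≤ 1/ε'`. The second point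
lies well inside `D_{ε''}` for `ε'' = (ε+ε')/2`, and `F` and `F̄` are uniformly continuous there; an
intermediate value argument along the segment keeps the first point in `D_{ε''}`, which rules out
`F ≥ 1/ε`, and the two inequalities for `F̄` differ by `η`, a contradiction (`exists_gap`). This is
where `ε < ε'` is needed.
-/

open Set Filter

noncomputable section

/-- Second derivative in the space variable of a function of `(t, x)`. -/
def d2x (u : ℝ → ℝ → ℝ) (t x : ℝ) : ℝ := iteratedDeriv 2 (fun y => u t y) x

/-- Data of the abstract market impact model of Section 2. -/
structure Standing where
  /-- the time horizon -/
  T : ℝ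
  T_pos : 0 < T
  /-- the threshold `ε₀` -/
  eps0 : ℝ
  eps0_mem : eps0 ∈ Set.Ioc (0 : ℝ) 1
  /-- the `ℝ ∪ {+∞}`-valued cost function `F` -/
  F : ℝ → ℝ → ℝ → EReal
  /-- the nonlinearity `F̄`, real-valued on the domain `D` -/
  Fbar : ℝ → ℝ → ℝ → ℝ
  /-- the gamma constraint `γ̄`, possibly `+∞` -/
  gammaBar : ℝ → ℝ → EReal
  L0 : ℝ
  M : ℝ
  L0_pos : 0 < L0
  M_pos : 0 < M
  /-- `∂ₜ F̄` -/
  FbarT : ℝ → ℝ → ℝ → ℝ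
  /-- `∂ₓ F̄` -/
  FbarX : ℝ → ℝ → ℝ → ℝ
  /-- `∂_z F̄` -/
  FbarZ : ℝ → ℝ → ℝ → ℝ

namespace Standing

/-- The domain `D = {F < ∞}`. -/
def D (S : Standing) : Set (ℝ × ℝ × ℝ) :=
  {p | p.1 ∈ Set.Icc 0 S.T ∧ S.F p.1 p.2.1 p.2.2 < ⊤}

/-- The set `D_ε = {F ≤ 1/ε}`. -/
def Deps (S : Standing) (ε : ℝ) : Set (ℝ × ℝ × ℝ) :=
  {p | p.1 ∈ Set.Icc 0 S.T ∧ S.F p.1 p.2.1 p.2.2 ≤ ((1 / ε : ℝ) : EReal)}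

/-- The set `D_{ε,k}`. -/
def DepsK (S : Standing) (ε k : ℝ) : Set (ℝ × ℝ × ℝ) :=
  S.Deps ε ∩ {p | |p.2.2| ≤ k}

/-- The standing assumptions on the abstract model. -/
structure Hyp (S : Standing) : Prop where
  /-- `F` is continuous (with values in `ℝ ∪ {+∞}`). -/
  F_cont : Continuous fun p : ℝ × ℝ × ℝ => S.F p.1 p.2.1 p.2.2
  /-- the domain of `F` is `{z < γ̄(t,x)}`. -/
  domain_eq : ∀ p : ℝ × ℝ × ℝ, p.1 ∈ Set.Icc 0 S.T →
      (S.F p.1 p.2.1 p.2.2 < ⊤ ↔ ((p.2.2 : ℝ) : EReal) < S.gammaBar p.1 p.2.1)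
  /-- `γ̄` is either identically `+∞` or real-valued and uniformly continuous. -/
  gamma_cases :
      (∀ t x, S.gammaBar t x = ⊤) ∨
      (∃ g : ℝ → ℝ → ℝ, (∀ t x, S.gammaBar t x = ((g t x : ℝ) : EReal)) ∧
        UniformContinuousOn (fun p : ℝ × ℝ => g p.1 p.2) (Set.Icc 0 S.T ×ˢ Set.univ))
  /-- `F̄` is continuous on `D`. -/
  Fbar_cont : ContinuousOn (fun p : ℝ × ℝ × ℝ => S.Fbar p.1 p.2.1 p.2.2) S.D
  /-- (R1) `F̄` is `C¹` on `D`: existence of the partial derivatives. -/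
  Fbar_dT : ∀ p ∈ S.D,
      HasDerivWithinAt (fun s => S.Fbar s p.2.1 p.2.2) (S.FbarT p.1 p.2.1 p.2.2)
        (Set.Icc 0 S.T) p.1
  Fbar_dX : ∀ p ∈ S.D,
      HasDerivAt (fun y => S.Fbar p.1 y p.2.2) (S.FbarX p.1 p.2.1 p.2.2) p.2.1
  Fbar_dZ : ∀ p ∈ S.D,
      HasDerivAt (fun w => S.Fbar p.1 p.2.1 w) (S.FbarZ p.1 p.2.1 p.2.2) p.2.2
  /-- (R1) continuity of the partial derivatives on `D`. -/
  FbarT_cont : ContinuousOn (fun p : ℝ × ℝ × ℝ => S.FbarT p.1 p.2.1 p.2.2) S.D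
  FbarX_cont : ContinuousOn (fun p : ℝ × ℝ × ℝ => S.FbarX p.1 p.2.1 p.2.2) S.D
  FbarZ_cont : ContinuousOn (fun p : ℝ × ℝ × ℝ => S.FbarZ p.1 p.2.1 p.2.2) S.D
  /-- (R1) partial derivatives of order `1` in `t`, up to `3` in `x` and in `z`,
  are bounded on `D_{ε,1/ε}`. -/
  derivs_bdd : ∀ ε ∈ Set.Ioc (0 : ℝ) S.eps0, ∃ C : ℝ,
      ∀ p ∈ S.DepsK ε (1 / ε), ∀ n : ℕ, 1 ≤ n → n ≤ 3 →
        |iteratedDeriv n (fun y => S.Fbar p.1 y p.2.2) p.2.1| ≤ C ∧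
        |iteratedDeriv n (fun w => S.Fbar p.1 p.2.1 w) p.2.2| ≤ C ∧
        |S.FbarT p.1 p.2.1 p.2.2| ≤ C
  /-- (R1) `F̄` is uniformly continuous on `D_ε`. -/
  Fbar_unifCont : ∀ ε ∈ Set.Ioc (0 : ℝ) S.eps0,
      UniformContinuousOn (fun p : ℝ × ℝ × ℝ => S.Fbar p.1 p.2.1 p.2.2) (S.Deps ε)
  /-- (R2) `F(t,x,0) = 0` and `F̄(t,x,0) = 0`. -/
  F_zero : ∀ t ∈ Set.Icc (0 : ℝ) S.T, ∀ x : ℝ, S.F t x 0 = 0 ∧ S.Fbar t x 0 = 0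
  /-- (R3) `|∂ₜF̄| ≤ L₀ |F̄|` on `D`. -/
  FbarT_bdd : ∀ p ∈ S.D,
      |S.FbarT p.1 p.2.1 p.2.2| ≤ S.L0 * |S.Fbar p.1 p.2.1 p.2.2|
  /-- (R3) `|∂²ₓF̄(t,x,z)| ≤ M |z|` on `D`. -/
  Fbarxx_bdd : ∀ p ∈ S.D,
      |iteratedDeriv 2 (fun y => S.Fbar p.1 y p.2.2) p.2.1| ≤ S.M * |p.2.2|
  /-- (R4) `∂_z F̄ > 0` on `D_ε`. -/
  FbarZ_pos : ∀ ε ∈ Set.Ioc (0 : ℝ) S.eps0, ∀ p ∈ S.Deps ε,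
      0 < S.FbarZ p.1 p.2.1 p.2.2
  /-- (R4) `∂_z F̄` and `1/∂_z F̄` are bounded on `D_{ε,1/ε}`. -/
  FbarZ_bdd : ∀ ε ∈ Set.Ioc (0 : ℝ) S.eps0, ∃ C > (0 : ℝ),
      ∀ p ∈ S.DepsK ε (1 / ε),
        S.FbarZ p.1 p.2.1 p.2.2 ≤ C ∧ 1 / C ≤ S.FbarZ p.1 p.2.1 p.2.2
  /-- (R5) `F` is uniformly continuous on `D_ε`. -/
  F_unifCont : ∀ ε ∈ Set.Ioc (0 : ℝ) S.eps0,
      UniformContinuousOn (fun p : ℝ × ℝ × ℝ => (S.F p.1 p.2.1 p.2.2).toReal) (S.Deps ε)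
  /-- (R5) `D_ε = {z ≤ γ̄_ε(t,x)}` for a continuous `γ̄_ε`. -/
  Deps_eq : ∀ ε ∈ Set.Ioc (0 : ℝ) S.eps0, ∃ γε : ℝ → ℝ → ℝ,
      Continuous (fun p : ℝ × ℝ => γε p.1 p.2) ∧
      S.Deps ε = {p : ℝ × ℝ × ℝ | p.1 ∈ Set.Icc 0 S.T ∧ p.2.2 ≤ γε p.1 p.2.1}

/-- The solution hypotheses of Proposition 3.6: `Φ` is a `C²` terminal condition with
`|Φ''| ≤ K_Φ` and `(T,·,Φ'') ∈ D_{ε_Φ}`, and `u` is a classical `C^{1,4}` solution of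
`∂ₜu + F̄(·,∂²ₓu) = 0` on `[0,T) × ℝ` with `u(T,·) = Φ`, `|∂²ₓu| ≤ K'` and
`(·,∂²ₓu) ∈ D_{ε'}`. -/
structure SolHyp (S : Standing) (KΦ εΦ : ℝ) (Φ : ℝ → ℝ) (K' ε' : ℝ)
    (u : ℝ → ℝ → ℝ) : Prop where
  KPhi_pos : 0 < KΦ
  epsPhi_mem : εΦ ∈ Set.Ioc (0 : ℝ) S.eps0
  Phi_C2 : ContDiff ℝ 2 Φ
  Phi_xx_bdd : ∀ x, |iteratedDeriv 2 Φ x| ≤ KΦ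
  Phi_dom : ∀ x, (S.T, x, iteratedDeriv 2 Φ x) ∈ S.Deps εΦ
  K'_pos : 0 < K'
  eps'_mem : ε' ∈ Set.Ioc (0 : ℝ) S.eps0
  u_cont : ContinuousOn (fun p : ℝ × ℝ => u p.1 p.2) (Set.Icc 0 S.T ×ˢ Set.univ)
  u_C4x : ∀ t ∈ Set.Ico (0 : ℝ) S.T, ContDiff ℝ 4 fun y => u t y
  u_derivs_cont : ∀ n : ℕ, n ≤ 4 → ContinuousOn
      (fun p : ℝ × ℝ => iteratedDeriv n (fun y => u p.1 y) p.2)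
      (Set.Ico 0 S.T ×ˢ Set.univ)
  u_C2x_T : ContDiff ℝ 2 fun y => u S.T y
  u_derivs2_cont : ∀ n : ℕ, n ≤ 2 → ContinuousOn
      (fun p : ℝ × ℝ => iteratedDeriv n (fun y => u p.1 y) p.2)
      (Set.Icc 0 S.T ×ˢ Set.univ)
  uxx_bdd : ∀ t ∈ Set.Icc (0 : ℝ) S.T, ∀ x, |d2x u t x| ≤ K'
  u_dom : ∀ t ∈ Set.Icc (0 : ℝ) S.T, ∀ x, (t, x, d2x u t x) ∈ S.Deps ε'
  pde : ∀ t ∈ Set.Ico (0 : ℝ) S.T, ∀ x,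
      HasDerivWithinAt (fun s => u s x) (-(S.Fbar t x (d2x u t x))) (Set.Ico 0 S.T) t
  terminal : ∀ x, u S.T x = Φ x

end Standing

namespace Standing

open Classical in
/-- `F̄` extended by `+∞` outside the domain `D`. -/
def FbarE (S : Standing) (t x z : ℝ) : EReal :=
  if (t, x, z) ∈ S.D then ((S.Fbar t x z : ℝ) : EReal) else ⊤

/-- `1/ε` with the convention `1/0 = +∞`. -/
def invE (ε : ℝ) : EReal := if ε = 0 then ⊤ else ((1 / ε : ℝ) : EReal)

/-- The Hamiltonian of equation (Eq`_ε`):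
`min{−a − F̄(t,x,q), 1/ε − F(t,x,q)}`, with values in `[−∞,+∞]`. -/
def Ham (S : Standing) (ε : ℝ) (t x a q : ℝ) : EReal :=
  min ((((-a : ℝ)) : EReal) - S.FbarE t x q) (invE ε - S.F t x q)

end Standing

/-- A test function: `C¹` in `t` and `C²` in `x` on `[0,T) × ℝ`. -/
structure IsTestFn (T : ℝ) (φ : ℝ → ℝ → ℝ) : Prop where
  t_diff : ∀ x : ℝ, ∀ t ∈ Set.Ico (0 : ℝ) T,
      DifferentiableWithinAt ℝ (fun s => φ s x) (Set.Ico 0 T) t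
  t_deriv_cont : ContinuousOn
      (fun p : ℝ × ℝ => derivWithin (fun s => φ s p.2) (Set.Ico 0 T) p.1)
      (Set.Ico 0 T ×ˢ Set.univ)
  x_C2 : ∀ t ∈ Set.Ico (0 : ℝ) T, ContDiff ℝ 2 fun y => φ t y
  x_derivs_cont : ∀ n : ℕ, n ≤ 2 → ContinuousOn
      (fun p : ℝ × ℝ => iteratedDeriv n (fun y => φ p.1 y) p.2)
      (Set.Ico 0 T ×ˢ Set.univ)

/-- Time derivative of a test function (within `[0,T)`). -/
def dtT (T : ℝ) (φ : ℝ → ℝ → ℝ) (t x : ℝ) : ℝ :=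
  derivWithin (fun s => φ s x) (Set.Ico 0 T) t

/-- Viscosity subsolution of (Eq`_ε`) on `[0,T) × ℝ`. -/
def IsSubsol (S : Standing) (ε : ℝ) (U : ℝ → ℝ → ℝ) : Prop :=
  ∀ φ : ℝ → ℝ → ℝ, IsTestFn S.T φ →
    ∀ t₀ ∈ Set.Ico (0 : ℝ) S.T, ∀ x₀ : ℝ,
      IsLocalMaxOn (fun p : ℝ × ℝ => U p.1 p.2 - φ p.1 p.2)
        (Set.Ico 0 S.T ×ˢ Set.univ) (t₀, x₀) →
      S.Ham ε t₀ x₀ (dtT S.T φ t₀ x₀) (d2x φ t₀ x₀) ≤ 0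

/-- Viscosity supersolution of (Eq`_ε`) on `[0,T) × ℝ`. -/
def IsSupersol (S : Standing) (ε : ℝ) (V : ℝ → ℝ → ℝ) : Prop :=
  ∀ φ : ℝ → ℝ → ℝ, IsTestFn S.T φ →
    ∀ t₀ ∈ Set.Ico (0 : ℝ) S.T, ∀ x₀ : ℝ,
      IsLocalMinOn (fun p : ℝ × ℝ => V p.1 p.2 - φ p.1 p.2)
        (Set.Ico 0 S.T ×ˢ Set.univ) (t₀, x₀) →
      0 ≤ S.Ham ε t₀ x₀ (dtT S.T φ t₀ x₀) (d2x φ t₀ x₀)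

/-- Linear growth on `[0,T] × ℝ`. -/
def LinGrowth (T : ℝ) (W : ℝ → ℝ → ℝ) : Prop :=
  ∃ C : ℝ, ∀ t ∈ Set.Icc (0 : ℝ) T, ∀ x : ℝ, |W t x| ≤ C * (1 + |x|)

open scoped Topology

/-! ### Quadratic test functions and second-order jets -/

/-- The quadratic polynomials `α s + A s² + b y + c y²`. -/
def quadFn (α A b c : ℝ) (s y : ℝ) : ℝ := α * s + A * s ^ 2 + b * y + c * y ^ 2

theorem quadFn_hasDerivWithinAt (T α A b c s y : ℝ) :
    HasDerivWithinAt (fun r => quadFn α A b c r y) (α + 2 * A * s) (Set.Ico 0 T) s := by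
  have h : HasDerivAt (fun r => quadFn α A b c r y) (α + 2 * A * s) s := by
    unfold quadFn
    have := ((((hasDerivAt_id s).const_mul α).add (((hasDerivAt_id s).pow 2).const_mul A)).add_const
      (b * y)).add_const (c * y ^ 2)
    exact this.congr_deriv (by
      simp only [id, mul_one, pow_one, Nat.cast_ofNat, Nat.add_one_sub_one]; ring)
  exact h.hasDerivWithinAt

theorem quadFn_dtT {T s : ℝ} (hs : s ∈ Set.Ico 0 T) (α A b c y : ℝ) :
    dtT T (quadFn α A b c) s y = α + 2 * A * s :=
  (quadFn_hasDerivWithinAt T α A b c s y).derivWithin (uniqueDiffOn_Ico 0 T s hs)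

theorem quadFn_deriv (α A b c s : ℝ) :
    deriv (fun y => quadFn α A b c s y) = fun y => b + 2 * c * y := by
  funext y
  have h : HasDerivAt (fun y => quadFn α A b c s y) (b + 2 * c * y) y := by
    unfold quadFn
    have := (((hasDerivAt_id y).const_mul b).const_add (α * s + A * s ^ 2)).add
      (((hasDerivAt_id y).pow 2).const_mul c)
    exact this.congr_deriv (by
      simp only [id, mul_one, pow_one, Nat.cast_ofNat, Nat.add_one_sub_one]; ring)
  exact h.deriv

theorem quadFn_d2x (α A b c s y : ℝ) : d2x (quadFn α A b c) s y = 2 * c := by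
  unfold d2x
  rw [iteratedDeriv_succ, iteratedDeriv_one, quadFn_deriv]
  have h : HasDerivAt (fun y : ℝ => b + 2 * c * y) (2 * c) y := by
    simpa using ((hasDerivAt_id y).const_mul (2 * c)).const_add b
  exact h.deriv

theorem quadFn_isTestFn (T α A b c : ℝ) : IsTestFn T (quadFn α A b c) where
  t_diff y s _ := (quadFn_hasDerivWithinAt T α A b c s y).differentiableWithinAt
  t_deriv_cont := by
    refine ContinuousOn.congr (f := fun p : ℝ × ℝ => α + 2 * A * p.1) (by fun_prop) ?_
    rintro ⟨s, y⟩ ⟨hs, -⟩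
    exact quadFn_dtT hs α A b c y
  x_C2 s _ := by unfold quadFn; fun_prop
  x_derivs_cont n hn := by
    interval_cases n
    · simp only [iteratedDeriv_zero]; unfold quadFn; fun_prop
    · simp only [iteratedDeriv_one, quadFn_deriv]; fun_prop
    · have h (p : ℝ × ℝ) : iteratedDeriv 2 (fun y => quadFn α A b c p.1 y) p.2 = 2 * c :=
        quadFn_d2x α A b c p.1 p.2
      simp only [h]; fun_prop

/-- `W` is touched from above at `(s, y)`, locally in `[0,T) × ℝ`, by a quadratic polynomial
(up to an additive constant) with time derivative `a` and second space derivative `q` there. -/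
def Touches (T : ℝ) (W : ℝ → ℝ → ℝ) (s y a q : ℝ) : Prop :=
  ∃ α A b : ℝ, α + 2 * A * s = a ∧
    IsLocalMaxOn (fun p : ℝ × ℝ => W p.1 p.2 - quadFn α A b (q / 2) p.1 p.2)
      (Set.Ico 0 T ×ˢ Set.univ) (s, y)

/-- The perturbation of `U` by `-η(T-t) - δx²` shifts time derivatives of test functions by `-η`
and second space derivatives by `2δ`. -/
theorem Touches.ham_nonpos {S : Standing} {ε : ℝ} {U : ℝ → ℝ → ℝ} (hU : IsSubsol S ε U)
    {η δ s y a q : ℝ} (hs : s ∈ Set.Ico 0 S.T)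
    (h : Touches S.T (fun t x => U t x - η * (S.T - t) - δ * x ^ 2) s y a q) :
    S.Ham ε s y (a - η) (q + 2 * δ) ≤ 0 := by
  obtain ⟨α, A, b, ha, hmax⟩ := h
  have key := hU (quadFn (α - η) A b (q / 2 + δ)) (quadFn_isTestFn _ _ _ _ _) s hs y ?_
  · rw [quadFn_dtT hs, quadFn_d2x] at key
    convert key using 2 <;> linarith
  · filter_upwards [hmax] with p hp
    simp only [quadFn] at hp ⊢
    nlinarith [hp]

theorem Touches.ham_nonneg {S : Standing} {ε : ℝ} {V : ℝ → ℝ → ℝ} (hV : IsSupersol S ε V)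
    {s y a q : ℝ} (hs : s ∈ Set.Ico 0 S.T)
    (h : Touches S.T (fun t x => -V t x) s y a q) :
    0 ≤ S.Ham ε s y (-a) (-q) := by
  obtain ⟨α, A, b, ha, hmax⟩ := h
  have key := hV (quadFn (-α) (-A) (-b) (-(q / 2))) (quadFn_isTestFn _ _ _ _ _) s hs y ?_
  · rw [quadFn_dtT hs, quadFn_d2x] at key
    convert key using 2 <;> linarith
  · filter_upwards [hmax] with p hp
    simp only [quadFn] at hp ⊢
    nlinarith [hp]

/-! ### Closedness of the two differential inequalities -/

/-- The points `(t, x, a, q)` at which the subsolution inequality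
`min{-a - F̄(t,x,q), 1/ε - F(t,x,q)} ≤ 0` holds. -/
def subSet (S : Standing) (ε : ℝ) : Set (ℝ × ℝ × ℝ × ℝ) :=
  {p | p.1 ∈ Set.Icc 0 S.T ∧ (Standing.invE ε ≤ S.F p.1 p.2.1 p.2.2.2 ∨
    (p.1, p.2.1, p.2.2.2) ∈ S.D ∧ -p.2.2.1 ≤ S.Fbar p.1 p.2.1 p.2.2.2)}

/-- The points `(t, x, a, q)` at which the supersolution inequality
`min{-a - F̄(t,x,q), 1/ε - F(t,x,q)} ≥ 0` holds. -/
def superSet (S : Standing) (ε : ℝ) : Set (ℝ × ℝ × ℝ × ℝ) :=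
  {p | (p.1, p.2.1, p.2.2.2) ∈ S.Deps ε ∧ S.Fbar p.1 p.2.1 p.2.2.2 ≤ -p.2.2.1}

theorem Deps_subset_D (S : Standing) (ε : ℝ) : S.Deps ε ⊆ S.D :=
  fun _ hp => ⟨hp.1, hp.2.trans_lt (EReal.coe_lt_top _)⟩

theorem mem_subSet {S : Standing} {ε s y a q : ℝ} (hs : s ∈ Set.Icc 0 S.T)
    (h : S.Ham ε s y a q ≤ 0) : (s, y, a, q) ∈ subSet S ε := by
  refine ⟨hs, ?_⟩
  rcases min_le_iff.1 h with h | h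
  · rw [EReal.sub_nonpos] at h
    unfold Standing.FbarE at h
    split_ifs at h with hD
    · exact Or.inr ⟨hD, EReal.coe_le_coe_iff.1 h⟩
    · have : S.F s y q = ⊤ := by
        by_contra hne
        exact hD ⟨hs, lt_top_iff_ne_top.2 hne⟩
      exact Or.inl (by simp [this])
  · exact Or.inl (EReal.sub_nonpos.1 h)

theorem mem_superSet {S : Standing} {ε s y a q : ℝ} (hε : 0 < ε) (hs : s ∈ Set.Icc 0 S.T)
    (h : 0 ≤ S.Ham ε s y a q) : (s, y, a, q) ∈ superSet S ε := by
  obtain ⟨h1, h2⟩ := le_min_iff.1 h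
  rw [Standing.invE, if_neg hε.ne', EReal.sub_nonneg (by simp) (by simp)] at h2
  have hd : (s, y, q) ∈ S.Deps ε := ⟨hs, h2⟩
  refine ⟨hd, ?_⟩
  rw [EReal.sub_nonneg (by simp) (by simp), Standing.FbarE, if_pos (Deps_subset_D S ε hd)] at h1
  exact EReal.coe_le_coe_iff.1 h1

theorem continuous_F_jet {S : Standing} (hS : S.Hyp) :
    Continuous fun p : ℝ × ℝ × ℝ × ℝ => S.F p.1 p.2.1 p.2.2.2 :=
  hS.F_cont.comp (f := fun p : ℝ × ℝ × ℝ × ℝ => (p.1, p.2.1, p.2.2.2)) (by fun_prop)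

/-- Sequential continuity of `F̄` along jets that stay in `D`. -/
theorem tendsto_Fbar_jet {S : Standing} (hS : S.Hyp) {u : ℕ → ℝ × ℝ × ℝ × ℝ}
    {p : ℝ × ℝ × ℝ × ℝ} (hup : Tendsto u atTop (𝓝 p)) (hp : (p.1, p.2.1, p.2.2.2) ∈ S.D)
    (hu : ∀ᶠ n in atTop, ((u n).1, (u n).2.1, (u n).2.2.2) ∈ S.D) :
    Tendsto (fun n => S.Fbar (u n).1 (u n).2.1 (u n).2.2.2) atTop
      (𝓝 (S.Fbar p.1 p.2.1 p.2.2.2)) := by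
  have hc : Continuous fun p : ℝ × ℝ × ℝ × ℝ => (p.1, p.2.1, p.2.2.2) := by fun_prop
  exact (hS.Fbar_cont _ hp).tendsto.comp
    (tendsto_nhdsWithin_iff.2 ⟨(hc.tendsto p).comp hup, hu⟩)

theorem isClosed_subSet {S : Standing} (hS : S.Hyp) (ε : ℝ) : IsClosed (subSet S ε) := by
  refine IsSeqClosed.isClosed fun u p hu hup => ?_
  have hp1 : p.1 ∈ Set.Icc 0 S.T :=
    isClosed_Icc.mem_of_tendsto ((continuous_fst.tendsto p).comp hup)
      (Eventually.of_forall fun n => (hu n).1)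
  refine ⟨hp1, ?_⟩
  by_cases hF : Standing.invE ε ≤ S.F p.1 p.2.1 p.2.2.2
  · exact Or.inl hF
  right
  have hlt := ((continuous_F_jet hS).tendsto p).comp hup |>.eventually_lt_const (not_le.1 hF)
  have hev : ∀ᶠ n in atTop, ((u n).1, (u n).2.1, (u n).2.2.2) ∈ S.D ∧
      -(u n).2.2.1 ≤ S.Fbar (u n).1 (u n).2.1 (u n).2.2.2 := by
    filter_upwards [hlt] with n hn
    exact (hu n).2.resolve_left (not_le.2 hn)
  have hpD : (p.1, p.2.1, p.2.2.2) ∈ S.D := ⟨hp1, (not_le.1 hF).trans_le le_top⟩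
  refine ⟨hpD, ?_⟩
  have ha : Tendsto (fun n => -(u n).2.2.1) atTop (𝓝 (-p.2.2.1)) :=
    ((by fun_prop : Continuous fun p : ℝ × ℝ × ℝ × ℝ => -p.2.2.1).tendsto p).comp hup
  exact le_of_tendsto_of_tendsto ha
    (tendsto_Fbar_jet hS hup hpD (hev.mono fun _ h => h.1)) (hev.mono fun _ h => h.2)

theorem isClosed_superSet {S : Standing} (hS : S.Hyp) (ε : ℝ) : IsClosed (superSet S ε) := by
  refine IsSeqClosed.isClosed fun u p hu hup => ?_
  have hp1 : p.1 ∈ Set.Icc 0 S.T :=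
    isClosed_Icc.mem_of_tendsto ((continuous_fst.tendsto p).comp hup)
      (Eventually.of_forall fun n => (hu n).1.1)
  have hp : (p.1, p.2.1, p.2.2.2) ∈ S.Deps ε :=
    ⟨hp1, le_of_tendsto (((continuous_F_jet hS).tendsto p).comp hup)
      (Eventually.of_forall fun n => (hu n).1.2)⟩
  refine ⟨hp, ?_⟩
  have ha : Tendsto (fun n => -(u n).2.2.1) atTop (𝓝 (-p.2.2.1)) :=
    ((by fun_prop : Continuous fun p : ℝ × ℝ × ℝ × ℝ => -p.2.2.1).tendsto p).comp hup
  exact le_of_tendsto_of_tendsto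
    (tendsto_Fbar_jet hS hup (Deps_subset_D S ε hp)
      (Eventually.of_forall fun n => Deps_subset_D S ε (hu n).1)) ha
    (Eventually.of_forall fun n => (hu n).2)

/-- Two points satisfying the sub- and the supersolution inequality with time slots `a - η`
and `a` cannot be close: along the segment between them `F` moves little on `D_{ε''}`, where
`ε < ε'' < ε'`, so `F` stays below `1/ε''` and the gamma constraint is not active for `U`;
then `F̄` would have to jump by `η`. -/
theorem exists_gap {S : Standing} (hS : S.Hyp) {ε ε' η : ℝ} (hε : 0 ≤ ε) (hε' : ε < ε')
    (hε'0 : ε' ≤ S.eps0) (hη : 0 < η) :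
    ∃ r > 0, ∀ s y s' y' a q q' : ℝ, |s - s'| < r → |y - y'| < r → |q - q'| < r →
      (s, y, a - η, q) ∈ subSet S ε → (s', y', a, q') ∈ superSet S ε' → False := by
  -- The intermediate level `ε''`.
  set e := (ε + ε') / 2 with he
  have he0 : 0 < e := by linarith
  have hee' : e < ε' := by linarith
  have heε : ε < e := by linarith
  have hemem : e ∈ Set.Ioc 0 S.eps0 := ⟨he0, by linarith⟩
  have hlt : 1 / ε' < 1 / e := one_div_lt_one_div_of_lt he0 hee'
  obtain ⟨r1, hr1, h1⟩ := Metric.uniformContinuousOn_iff.1 (hS.F_unifCont e hemem)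
    (1 / e - 1 / ε') (by linarith)
  obtain ⟨r2, hr2, h2⟩ := Metric.uniformContinuousOn_iff.1 (hS.Fbar_unifCont e hemem) η hη
  refine ⟨min r1 r2, lt_min hr1 hr2, ?_⟩
  intro s y s' y' a q q' hs hy hq hsub hsup
  obtain ⟨hsT, hsub⟩ := hsub
  obtain ⟨⟨hs'T, hF'⟩, hFbar'⟩ := hsup
  simp only at hsT hsub hs'T hF' hFbar'
  set p : ℝ × ℝ × ℝ := (s, y, q) with hp
  set p' : ℝ × ℝ × ℝ := (s', y', q') with hp'
  have hdist : dist p p' < min r1 r2 := by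
    simp only [hp, hp', Prod.dist_eq, Real.dist_eq]
    exact max_lt hs (max_lt hy hq)
  have hp'e : p' ∈ S.Deps e := ⟨hs'T, hF'.trans (EReal.coe_le_coe_iff.2 hlt.le)⟩
  have hpe : p ∈ S.Deps e := by
    refine ⟨hsT, ?_⟩
    by_contra hcon
    rw [not_le] at hcon
    have hcont : Continuous fun θ : ℝ => S.F (AffineMap.lineMap p' p θ).1
        (AffineMap.lineMap p' p θ).2.1 (AffineMap.lineMap p' p θ).2.2 :=
      hS.F_cont.comp (AffineMap.lineMap_continuous (R := ℝ) (p := p') (q := p))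
    have hIVT := intermediate_value_Icc (zero_le_one' ℝ) hcont.continuousOn
    simp only [AffineMap.lineMap_apply_zero, AffineMap.lineMap_apply_one] at hIVT
    -- Points of the segment where `F` equals exactly `1/ε'` and `1/ε''`.
    obtain ⟨θ1, hθ1, e1⟩ := hIVT ⟨hF', (EReal.coe_le_coe_iff.2 hlt.le).trans hcon.le⟩
    obtain ⟨θ2, hθ2, e2⟩ := hIVT ⟨hF'.trans (EReal.coe_le_coe_iff.2 hlt.le), hcon.le⟩
    have hmem (θ : ℝ) (hθ : θ ∈ Set.Icc (0 : ℝ) 1) :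
        (AffineMap.lineMap p' p θ : ℝ × ℝ × ℝ).1 ∈ Set.Icc 0 S.T := by
      have : (AffineMap.lineMap p' p θ : ℝ × ℝ × ℝ).1 = AffineMap.lineMap s' s θ := by
        simp [AffineMap.lineMap_apply, hp, hp']
      rw [this]
      exact (convex_Icc 0 S.T).lineMap_mem hs'T hsT hθ
    have hd : dist (AffineMap.lineMap p' p θ2 : ℝ × ℝ × ℝ) (AffineMap.lineMap p' p θ1) < r1 := by
      rw [dist_lineMap_lineMap, dist_comm p' p]
      have : dist θ2 θ1 ≤ 1 := by
        rw [Real.dist_eq, abs_le]; constructor <;> linarith [hθ1.1, hθ1.2, hθ2.1, hθ2.2]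
      calc _ ≤ 1 * dist p p' := by gcongr
        _ < r1 := by rw [one_mul]; exact hdist.trans_le (min_le_left _ _)
    have := h1 _ ⟨hmem θ2 hθ2, e2.le⟩ _
      ⟨hmem θ1 hθ1, e1.le.trans (EReal.coe_le_coe_iff.2 hlt.le)⟩ hd
    simp only at e1 e2
    rw [e1, e2, EReal.toReal_coe, EReal.toReal_coe, Real.dist_eq] at this
    exact absurd (le_abs_self _) (not_le.2 this)
  have hFb := h2 p hpe p' hp'e (hdist.trans_le (min_le_right _ _))
  rw [Real.dist_eq, abs_lt] at hFb
  simp only [hp, hp'] at hFb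
  rcases hsub with hsub | ⟨-, hsub⟩
  · have hle : Standing.invE ε ≤ ((1 / e : ℝ) : EReal) := hsub.trans hpe.2
    unfold Standing.invE at hle
    split_ifs at hle with h0
    · exact absurd hle (not_le.2 (EReal.coe_lt_top _))
    · have hpos : 0 < ε := lt_of_le_of_ne hε (Ne.symm h0)
      exact absurd (EReal.coe_le_coe_iff.1 hle) (not_le.2 (one_div_lt_one_div_of_lt hpos heε))
  · linarith [hFb.1, hFb.2]

/-! ### A one-dimensional theorem on sums -/

theorem exists_quad_dominates {a : ℝ} (ha : 0 < a) (c d : ℝ) :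
    ∃ R : ℝ, 0 ≤ R ∧ ∀ y : ℝ, R < |y| → c * |y| + d < a * y ^ 2 := by
  refine ⟨max 1 ((|c| + |d|) / a), by positivity, fun y hy => ?_⟩
  have h1 : 1 < |y| := (le_max_left _ _).trans_lt hy
  have h2 : |c| + |d| < |y| * a := (div_lt_iff₀ ha).1 ((le_max_right _ _).trans_lt hy)
  rw [← sq_abs y]
  have hd : d ≤ |d| * |y| := (le_abs_self d).trans (le_mul_of_one_le_right (abs_nonneg d) h1.le)
  have hc : c * |y| ≤ |c| * |y| := mul_le_mul_of_nonneg_right (le_abs_self c) (abs_nonneg y)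
  nlinarith [mul_lt_mul_of_pos_right h2 (by linarith : 0 < |y|)]

/-- The functions to which the theorem on sums applies: upper semicontinuous with at most linear
growth from above. -/
structure Admissible (T : ℝ) (W : ℝ → ℝ → ℝ) : Prop where
  usc : UpperSemicontinuousOn (fun p : ℝ × ℝ => W p.1 p.2) (Set.Icc 0 T ×ˢ Set.univ)
  growth : ∃ C : ℝ, ∀ s ∈ Set.Icc 0 T, ∀ y : ℝ, W s y ≤ C * (1 + |y|)

/-- The function whose supremum over `(s, y)` is the sup-convolution of `W` at `(t, x)`. -/
def conv (W : ℝ → ℝ → ℝ) (n t x s y : ℝ) : ℝ := W s y - n * (s - t) ^ 2 - n * (x - y) ^ 2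

theorem Admissible.exists_max {T : ℝ} (hT : 0 < T) {W : ℝ → ℝ → ℝ} (hW : Admissible T W) {n : ℝ}
    (hn : 0 < n) (t : ℝ) {l u : ℝ} (hlu : l ≤ u) {P : ℝ → ℝ} (hP : Continuous P) :
    ∃ x ∈ Set.Icc l u, ∃ s ∈ Set.Icc 0 T, ∃ y : ℝ,
      ∀ x' ∈ Set.Icc l u, ∀ s' ∈ Set.Icc 0 T, ∀ y' : ℝ,
        conv W n t x' s' y' - P x' ≤ conv W n t x s y - P x := by
  obtain ⟨C, hC⟩ := hW.growth
  obtain ⟨m, hm⟩ := (isCompact_Icc (a := l) (b := u)).bddBelow_image hP.continuousOn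
  have hPm (x : ℝ) (hx : x ∈ Set.Icc l u) : m ≤ P x := hm ⟨x, hx, rfl⟩
  set B := max |l| |u| with hB
  have hxB (x : ℝ) (hx : x ∈ Set.Icc l u) : |x| ≤ B := abs_le_max_abs_abs hx.1 hx.2
  obtain ⟨R, hR0, hR⟩ := exists_quad_dominates (by positivity : 0 < n / 2) C
    (C + n * B ^ 2 - m - (conv W n t l 0 0 - P l))
  let G : ℝ × ℝ × ℝ → ℝ := fun p => conv W n t p.1 p.2.1 p.2.2 - P p.1
  let K : Set (ℝ × ℝ × ℝ) := Set.Icc l u ×ˢ Set.Icc 0 T ×ˢ Set.Icc (-R) R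
  have hK : IsCompact K := isCompact_Icc.prod (isCompact_Icc.prod isCompact_Icc)
  have h0K : (l, (0 : ℝ), (0 : ℝ)) ∈ K :=
    ⟨⟨le_rfl, hlu⟩, ⟨le_rfl, hT.le⟩, by simp [hR0], by simp [hR0]⟩
  have hG : UpperSemicontinuousOn G K := by
    have h1 : UpperSemicontinuousOn (fun p : ℝ × ℝ × ℝ => W p.2.1 p.2.2) K :=
      hW.usc.comp (g := fun p : ℝ × ℝ × ℝ => p.2) (by fun_prop)
        (fun p hp => ⟨hp.2.1, trivial⟩)
    have h2 : UpperSemicontinuousOn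
        (fun p : ℝ × ℝ × ℝ => - n * (p.2.1 - t) ^ 2 - n * (p.1 - p.2.2) ^ 2 - P p.1) K :=
      ContinuousOn.upperSemicontinuousOn (by fun_prop)
    have h3 : G = fun p : ℝ × ℝ × ℝ => W p.2.1 p.2.2 +
        (- n * (p.2.1 - t) ^ 2 - n * (p.1 - p.2.2) ^ 2 - P p.1) := by
      funext p; simp only [G, conv]; ring
    rw [h3]
    exact h1.add h2
  obtain ⟨⟨x, s, y⟩, ⟨hx, hs, hy⟩, hmax⟩ := hG.exists_isMaxOn ⟨_, h0K⟩ hK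
  refine ⟨x, hx, s, hs, y, fun x' hx' s' hs' y' => ?_⟩
  by_cases hy' : |y'| ≤ R
  · exact hmax (a := (x', s', y')) ⟨hx', hs', abs_le.1 hy'⟩
  · have h1 := hR y' (not_le.1 hy')
    have h2 : G (l, 0, 0) ≤ G (x, s, y) := hmax h0K
    have h3 := hC s' hs' y'
    have h4 := hPm x' hx'
    have h5 : x' ^ 2 ≤ B ^ 2 := sq_le_sq' (by linarith [(abs_le.1 (hxB x' hx')).1])
      (abs_le.1 (hxB x' hx')).2
    refine le_trans ?_ h2
    simp only [G, conv] at h1 ⊢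
    have h6 : n * x' ^ 2 ≤ n * B ^ 2 := by gcongr
    have h7 : 0 ≤ n * (s' - t) ^ 2 := by positivity
    have h8 : 0 ≤ n * (2 * x' - y') ^ 2 := by positivity
    nlinarith

/-- The sup-convolution exists and its supremum is attained. -/
theorem Admissible.exists_supConv {T : ℝ} (hT : 0 < T) {W : ℝ → ℝ → ℝ} (hW : Admissible T W)
    {n : ℝ} (hn : 0 < n) (t : ℝ) :
    ∃ f : ℝ → ℝ, (∀ x, ∃ s ∈ Set.Icc 0 T, ∃ y, conv W n t x s y = f x) ∧
      ∀ x, ∀ s ∈ Set.Icc 0 T, ∀ y, conv W n t x s y ≤ f x := by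
  have h (x : ℝ) : ∃ v : ℝ, (∃ s ∈ Set.Icc 0 T, ∃ y, conv W n t x s y = v) ∧
      ∀ s ∈ Set.Icc 0 T, ∀ y, conv W n t x s y ≤ v := by
    obtain ⟨x₁, hx₁, s, hs, y, hmax⟩ := hW.exists_max hT hn t (le_refl x)
      (continuous_const (y := (0 : ℝ)))
    obtain rfl : x₁ = x := le_antisymm hx₁.2 hx₁.1
    exact ⟨_, ⟨s, hs, y, rfl⟩, fun s' hs' y' => by
      have := hmax x₁ ⟨le_rfl, le_rfl⟩ s' hs' y'
      simpa using this⟩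
  choose f hf using h
  exact ⟨f, fun x => (hf x).1, fun x => (hf x).2⟩

/-- If the sup-convolution `f` minus a parabola of curvature `κ` is at least as large at the
midpoint `z` of an interval as at its endpoints, then an interior maximum of the difference yields,
after translation in space, a polynomial touching `W` from above with curvature `κ`. Only the
frozen time `t` enters: the time derivative of the polynomial comes from `n (s - t)²`. -/
theorem Admissible.exists_touch {T : ℝ} (hT : 0 < T) {W : ℝ → ℝ → ℝ} (hW : Admissible T W)
    {n : ℝ} (hn : 0 < n) {t : ℝ} {f : ℝ → ℝ}
    (hf : ∀ x, ∃ s ∈ Set.Icc 0 T, ∃ y, conv W n t x s y = f x)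
    (hf' : ∀ x, ∀ s ∈ Set.Icc 0 T, ∀ y, conv W n t x s y ≤ f x)
    {z h : ℝ} (hh : 0 < h) (A B κ : ℝ)
    (hl : f (z - h) - (A + B * (-h) + κ / 2 * h ^ 2) ≤ f z - A)
    (hr : f (z + h) - (A + B * h + κ / 2 * h ^ 2) ≤ f z - A) :
    ∃ x, |x - z| < h ∧ ∃ s ∈ Set.Icc 0 T, ∃ y, conv W n t x s y = f x ∧
      Touches T W s y (2 * n * (s - t)) κ := by
  set P : ℝ → ℝ := fun x => A + B * (x - z) + κ / 2 * (x - z) ^ 2 with hP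
  -- It suffices to find an interior maximum point.
  suffices H : ∃ x, |x - z| < h ∧ ∃ s ∈ Set.Icc 0 T, ∃ y,
      ∀ x' ∈ Set.Icc (z - h) (z + h), ∀ s' ∈ Set.Icc 0 T, ∀ y' : ℝ,
        conv W n t x' s' y' - P x' ≤ conv W n t x s y - P x by
    obtain ⟨x, hx, s, hs, y, hmax⟩ := H
    have hxm : x ∈ Set.Icc (z - h) (z + h) := by
      rw [abs_lt] at hx; constructor <;> linarith [hx.1, hx.2]
    refine ⟨x, hx, s, hs, y, ?_, -2 * n * t, n, B + κ * (x - y - z), by ring, ?_⟩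
    · obtain ⟨s₁, hs₁, y₁, h₁⟩ := hf x
      have := hmax x hxm s₁ hs₁ y₁
      have := hf' x s hs y
      linarith
    · have hc : Continuous fun p : ℝ × ℝ => |p.2 + (x - y) - z| := by fun_prop
      have hev : ∀ᶠ p : ℝ × ℝ in 𝓝[Set.Ico 0 T ×ˢ Set.univ] (s, y), |p.2 + (x - y) - z| < h :=
        nhdsWithin_le_nhds (hc.continuousAt.eventually_lt_const (by simpa using hx))
      filter_upwards [hev, self_mem_nhdsWithin] with p hp hpm
      have hp' : p.2 + (x - y) ∈ Set.Icc (z - h) (z + h) := by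
        rw [abs_lt] at hp; constructor <;> linarith [hp.1, hp.2]
      have := hmax _ hp' p.1 ⟨hpm.1.1, hpm.1.2.le⟩ p.2
      simp only [conv, hP, quadFn] at this ⊢
      nlinarith [this]
  obtain ⟨x, hx, s, hs, y, hmax⟩ := hW.exists_max hT hn t (by linarith : z - h ≤ z + h)
    (P := P) (by fun_prop)
  by_cases hint : |x - z| < h
  · exact ⟨x, hint, s, hs, y, hmax⟩
  -- If the maximum is attained at an endpoint, then it is also attained at the midpoint.
  · obtain ⟨s₀, hs₀, y₀, h₀⟩ := hf z
    refine ⟨z, by simpa using hh, s₀, hs₀, y₀, fun x' hx' s' hs' y' =>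
      (hmax x' hx' s' hs' y').trans ?_⟩
    have hPz : P z = A := by simp [hP]
    rw [h₀, hPz]
    have hle := hf' x s hs y
    have hx2 : x = z - h ∨ x = z + h := by
      rcases le_abs.1 (not_lt.1 hint) with h1 | h1
      · right; linarith [hx.2]
      · left; linarith [hx.1]
    rcases hx2 with rfl | rfl
    · have : P (z - h) = A + B * (-h) + κ / 2 * h ^ 2 := by simp only [hP]; ring
      linarith
    · have : P (z + h) = A + B * h + κ / 2 * h ^ 2 := by simp only [hP]; ring
      linarith

/-- Quantitative uniqueness for the sup-convolution: `(s₁, y₁, s₂, y₂)` maximizes the doubled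
function and `t`, `z` are the midpoints; a point attaining the sup-convolution of `W₁` at `x` is
within `O(|x - z|)` of `(s₁, y₁)`. -/
theorem conv_maximizer_close {W₁ W₂ : ℝ → ℝ → ℝ} {n : ℝ} (hn : 0 < n) {s₁ y₁ s₂ y₂ s y x h : ℝ}
    (hmax : W₁ s y + W₂ s₂ y₂ - n / 2 * ((s - s₂) ^ 2 + (y - y₂) ^ 2) ≤
      W₁ s₁ y₁ + W₂ s₂ y₂ - n / 2 * ((s₁ - s₂) ^ 2 + (y₁ - y₂) ^ 2))
    (hconv : conv W₁ n ((s₁ + s₂) / 2) x s₁ y₁ ≤ conv W₁ n ((s₁ + s₂) / 2) x s y)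
    (hx : |x - (y₁ + y₂) / 2| < h) : |s - s₁| ≤ 4 * h ∧ |y - y₁| ≤ 4 * h := by
  unfold conv at hconv
  have h1 : n * ((s - s₁) ^ 2 + (y - y₁) ^ 2 - 4 * (x - (y₁ + y₂) / 2) * (y - y₁)) ≤ 0 := by
    nlinarith [hmax, hconv]
  have h2 : (s - s₁) ^ 2 + (y - y₁) ^ 2 ≤ 4 * (x - (y₁ + y₂) / 2) * (y - y₁) := by
    by_contra hcon
    nlinarith [mul_pos hn (by linarith : 0 < (s - s₁) ^ 2 + (y - y₁) ^ 2 -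
      4 * (x - (y₁ + y₂) / 2) * (y - y₁))]
  have h3 : (x - (y₁ + y₂) / 2) ^ 2 < h ^ 2 := sq_lt_sq' (abs_lt.1 hx).1 (abs_lt.1 hx).2
  have hh : 0 ≤ h := (abs_nonneg _).trans hx.le
  constructor
  · refine abs_le_of_sq_le_sq ?_ (by linarith)
    nlinarith [sq_nonneg (y - y₁ - 2 * (x - (y₁ + y₂) / 2))]
  · refine abs_le_of_sq_le_sq ?_ (by linarith)
    nlinarith [sq_nonneg (y - y₁ - 4 * (x - (y₁ + y₂) / 2)), sq_nonneg (s - s₁)]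

/-- For every curvature `κ` and every scale `h`, either `W₁` is touched from above with curvature
`κ`, or `W₂` with curvature `-κ`, at a point within `O(h)` of the maximum point of the doubled
function. The polynomials come from the parabola of curvature `κ` that agrees with
(maximum) `- f₂` at the endpoints of the interval of radius `h`, where `f₂` is the
sup-convolution of `W₂`: at the midpoint it lies below `f₁` or above (maximum) `- f₂`. -/
theorem touch_dichotomy {T : ℝ} (hT : 0 < T) {W₁ W₂ : ℝ → ℝ → ℝ} (hW₁ : Admissible T W₁)
    (hW₂ : Admissible T W₂) {n : ℝ} (hn : 0 < n) {s₁ y₁ s₂ y₂ : ℝ}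
    (hs₁ : s₁ ∈ Set.Icc 0 T) (hs₂ : s₂ ∈ Set.Icc 0 T)
    (hmax : ∀ s ∈ Set.Icc 0 T, ∀ y, ∀ s' ∈ Set.Icc 0 T, ∀ y',
      W₁ s y + W₂ s' y' - n / 2 * ((s - s') ^ 2 + (y - y') ^ 2) ≤
        W₁ s₁ y₁ + W₂ s₂ y₂ - n / 2 * ((s₁ - s₂) ^ 2 + (y₁ - y₂) ^ 2))
    (κ : ℝ) {h : ℝ} (hh : 0 < h) :
    (∃ s ∈ Set.Icc 0 T, ∃ y, |s - s₁| ≤ 4 * h ∧ |y - y₁| ≤ 4 * h ∧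
      Touches T W₁ s y (2 * n * (s - (s₁ + s₂) / 2)) κ) ∨
    (∃ s ∈ Set.Icc 0 T, ∃ y, |s - s₂| ≤ 4 * h ∧ |y - y₂| ≤ 4 * h ∧
      Touches T W₂ s y (2 * n * (s - (s₁ + s₂) / 2)) (-κ)) := by
  set t := (s₁ + s₂) / 2 with ht
  set z := (y₁ + y₂) / 2 with hz
  obtain ⟨f₁, hf₁, hf₁'⟩ := hW₁.exists_supConv hT hn t
  obtain ⟨f₂, hf₂, hf₂'⟩ := hW₂.exists_supConv hT hn t
  set m := W₁ s₁ y₁ + W₂ s₂ y₂ - n / 2 * ((s₁ - s₂) ^ 2 + (y₁ - y₂) ^ 2) with hm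
  have hsum (x : ℝ) : f₁ x + f₂ x ≤ m := by
    obtain ⟨s, hs, y, e1⟩ := hf₁ x
    obtain ⟨s', hs', y', e2⟩ := hf₂ x
    have := hmax s hs y s' hs' y'
    rw [← e1, ← e2]
    unfold conv
    nlinarith [mul_nonneg hn.le (sq_nonneg (s + s' - 2 * t)),
      mul_nonneg hn.le (sq_nonneg (y + y' - 2 * x))]
  have hmid : m ≤ f₁ z + f₂ z := by
    have h1 := hf₁' z s₁ hs₁ y₁
    have h2 := hf₂' z s₂ hs₂ y₂
    unfold conv at h1 h2
    have : n * (s₁ - t) ^ 2 + n * (z - y₁) ^ 2 + (n * (s₂ - t) ^ 2 + n * (z - y₂) ^ 2) =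
        n / 2 * ((s₁ - s₂) ^ 2 + (y₁ - y₂) ^ 2) := by rw [ht, hz]; ring
    linarith
  have hL := hsum (z - h)
  have hR := hsum (z + h)
  have hZ := hsum z
  -- `A + B (x - z) + κ/2 (x - z)²` agrees with `m - f₂` at `z - h` and `z + h`.
  set A := m - (f₂ (z - h) + f₂ (z + h)) / 2 - κ / 2 * h ^ 2 with hA
  set B := (f₂ (z - h) - f₂ (z + h)) / (2 * h) with hB
  have hBh : B * h = (f₂ (z - h) - f₂ (z + h)) / 2 := by
    rw [hB]; field_simp
  rcases le_total A (f₁ z) with hc | hc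
  · left
    obtain ⟨x, hx, s, hs, y, hat, htouch⟩ := hW₁.exists_touch hT hn hf₁ hf₁' (z := z) hh A B κ
      (by linarith) (by linarith)
    have := conv_maximizer_close (W₂ := W₂) hn (hmax s hs y s₂ hs₂ y₂)
      ((hf₁' x s₁ hs₁ y₁).trans hat.ge) hx
    exact ⟨s, hs, y, this.1, this.2, htouch⟩
  · right
    obtain ⟨x, hx, s, hs, y, hat, htouch⟩ := hW₂.exists_touch hT hn hf₂ hf₂' (z := z) hh (m - A)
      (-B) (-κ)
      (by linarith) (by linarith)
    have hsymm : W₂ s y + W₁ s₁ y₁ - n / 2 * ((s - s₁) ^ 2 + (y - y₁) ^ 2) ≤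
        W₂ s₂ y₂ + W₁ s₁ y₁ - n / 2 * ((s₂ - s₁) ^ 2 + (y₂ - y₁) ^ 2) := by
      have := hmax s₁ hs₁ y₁ s hs y
      nlinarith [this]
    have hcle := (hf₂' x s₂ hs₂ y₂).trans hat.ge
    rw [ht, add_comm s₁ s₂] at hcle
    rw [hz, add_comm y₁ y₂] at hx
    have := conv_maximizer_close (W₂ := W₁) hn hsymm hcle hx
    exact ⟨s, hs, y, this.1, this.2, htouch⟩

/-- **Theorem on sums in one space dimension.** At a maximum point of the doubled function, both
functions have limiting second-order jets with opposite time derivatives and opposite curvatures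
`κ`, `-κ`. The admissible curvatures for `W₁` and for `W₂` form two closed sets that cover `ℝ` by
`touch_dichotomy` and are nonempty because of the doubling penalty itself, so they intersect. -/
theorem exists_common_curvature {T : ℝ} (hT : 0 < T) {W₁ W₂ : ℝ → ℝ → ℝ} (hW₁ : Admissible T W₁)
    (hW₂ : Admissible T W₂) {n : ℝ} (hn : 0 < n) {s₁ y₁ s₂ y₂ : ℝ}
    (hs₁ : s₁ ∈ Set.Ico 0 T) (hs₂ : s₂ ∈ Set.Ico 0 T)
    (hmax : ∀ s ∈ Set.Icc 0 T, ∀ y, ∀ s' ∈ Set.Icc 0 T, ∀ y',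
      W₁ s y + W₂ s' y' - n / 2 * ((s - s') ^ 2 + (y - y') ^ 2) ≤
        W₁ s₁ y₁ + W₂ s₂ y₂ - n / 2 * ((s₁ - s₂) ^ 2 + (y₁ - y₂) ^ 2))
    {C₁ C₂ : Set (ℝ × ℝ × ℝ × ℝ)} (hC₁ : IsClosed C₁) (hC₂ : IsClosed C₂)
    (hJ₁ : ∀ s y a q, s ∈ Set.Ico 0 T → Touches T W₁ s y a q → (s, y, a, q) ∈ C₁)
    (hJ₂ : ∀ s y a q, s ∈ Set.Ico 0 T → Touches T W₂ s y a q → (s, y, a, q) ∈ C₂) :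
    ∃ κ, (s₁, y₁, n * (s₁ - s₂), κ) ∈ C₁ ∧ (s₂, y₂, n * (s₂ - s₁), -κ) ∈ C₂ := by
  have hs₁' : s₁ ∈ Set.Icc 0 T := ⟨hs₁.1, hs₁.2.le⟩
  have hs₂' : s₂ ∈ Set.Icc 0 T := ⟨hs₂.1, hs₂.2.le⟩
  set K₁ : Set ℝ := {κ | (s₁, y₁, n * (s₁ - s₂), κ) ∈ C₁} with hK₁
  set K₂ : Set ℝ := {κ | (s₂, y₂, n * (s₂ - s₁), -κ) ∈ C₂} with hK₂
  have hcl₁ : IsClosed K₁ := hC₁.preimage (f := fun κ => (s₁, y₁, n * (s₁ - s₂), κ)) (by fun_prop)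
  have hcl₂ : IsClosed K₂ := hC₂.preimage (f := fun κ => (s₂, y₂, n * (s₂ - s₁), -κ)) (by fun_prop)
  -- With one pair of variables frozen at the maximum point, the penalty is a test function with
  -- second space derivative `n` for `W₁`, and likewise for `W₂`.
  have hne₁ : n ∈ K₁ := by
    refine hJ₁ _ _ _ _ hs₁ ⟨-n * s₂, n / 2, -n * y₂, by ring, ?_⟩
    filter_upwards [self_mem_nhdsWithin] with p hp
    have := hmax p.1 ⟨hp.1.1, hp.1.2.le⟩ p.2 s₂ hs₂' y₂
    simp only [quadFn]
    linarith
  have hne₂ : -n ∈ K₂ := by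
    refine hJ₂ _ _ _ _ hs₂ ⟨-n * s₁, n / 2, -n * y₁, by ring, ?_⟩
    filter_upwards [self_mem_nhdsWithin] with p hp
    have := hmax s₁ hs₁' y₁ p.1 ⟨hp.1.1, hp.1.2.le⟩ p.2
    simp only [quadFn]
    linarith
  have hcover (κ : ℝ) : κ ∈ K₁ ∨ κ ∈ K₂ := by
    by_contra! hcon
    obtain ⟨h₁, h₂⟩ := hcon
    have key {C : Set (ℝ × ℝ × ℝ × ℝ)} (hC : IsClosed C) (s₀ y₀ q : ℝ) (hs₀ : s₀ < T)
        (hnot : (s₀, y₀, 2 * n * (s₀ - (s₁ + s₂) / 2), q) ∉ C) :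
        ∃ r > 0, ∀ s y, |s - s₀| < r → |y - y₀| < r →
          s < T ∧ (s, y, 2 * n * (s - (s₁ + s₂) / 2), q) ∉ C := by
      have ho : IsOpen {p : ℝ × ℝ | p.1 < T ∧ (p.1, p.2, 2 * n * (p.1 - (s₁ + s₂) / 2), q) ∉ C} :=
        (isOpen_lt continuous_fst continuous_const).inter
          (hC.isOpen_compl.preimage (f := fun p : ℝ × ℝ =>
            (p.1, p.2, 2 * n * (p.1 - (s₁ + s₂) / 2), q)) (by fun_prop))
      obtain ⟨r, hr, hball⟩ := Metric.isOpen_iff.1 ho (s₀, y₀) ⟨hs₀, hnot⟩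
      refine ⟨r, hr, fun s y hs hy => hball (a := (s, y)) ?_⟩
      rw [Metric.mem_ball, Prod.dist_eq, Real.dist_eq, Real.dist_eq]
      exact max_lt hs hy
    have e₁ : 2 * n * (s₁ - (s₁ + s₂) / 2) = n * (s₁ - s₂) := by ring
    have e₂ : 2 * n * (s₂ - (s₁ + s₂) / 2) = n * (s₂ - s₁) := by ring
    obtain ⟨r₁, hr₁, H₁⟩ := key hC₁ s₁ y₁ κ hs₁.2 (by rw [e₁]; exact h₁)
    obtain ⟨r₂, hr₂, H₂⟩ := key hC₂ s₂ y₂ (-κ) hs₂.2 (by rw [e₂]; exact h₂)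
    have hmin : 0 < min r₁ r₂ := lt_min hr₁ hr₂
    have hm₁ := min_le_left r₁ r₂
    have hm₂ := min_le_right r₁ r₂
    rcases touch_dichotomy hT hW₁ hW₂ hn hs₁' hs₂' hmax κ (h := min r₁ r₂ / 8) (by linarith)
      with ⟨s, hs, y, h3, h4, h5⟩ | ⟨s, hs, y, h3, h4, h5⟩
    · obtain ⟨h6, h7⟩ := H₁ s y (by linarith) (by linarith)
      exact h7 (hJ₁ s y _ κ ⟨hs.1, h6⟩ h5)
    · obtain ⟨h6, h7⟩ := H₂ s y (by linarith) (by linarith)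
      exact h7 (hJ₂ s y _ (-κ) ⟨hs.1, h6⟩ h5)
  obtain ⟨κ, -, hκ⟩ := isPreconnected_closed_iff.1 (isPreconnected_univ (α := ℝ)) K₁ K₂ hcl₁ hcl₂
    (fun κ _ => hcover κ) ⟨n, trivial, hne₁⟩ ⟨-n, trivial, hne₂⟩
  exact ⟨κ, hκ.1, hκ.2⟩

/-! ### The maximum points of the doubled function -/

/-- The domain of the doubled function. -/
def dblDom (T : ℝ) : Set ((ℝ × ℝ) × ℝ × ℝ) :=
  (Set.Icc 0 T ×ˢ Set.univ) ×ˢ (Set.Icc 0 T ×ˢ Set.univ)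

/-- Where the doubled function is nonnegative, the space variables are bounded and the distance
of the two points is `O(n^{-1/2})`, because of the term `-δy²` in `W₁`. -/
theorem doubling_bounds {T : ℝ} {W₁ W₂ : ℝ → ℝ → ℝ} {C δ : ℝ} (hδ : 0 < δ) (hC : 0 ≤ C)
    (h₁ : ∀ s ∈ Set.Icc 0 T, ∀ y, W₁ s y ≤ C * (1 + |y|) - δ * y ^ 2)
    (h₂ : ∀ s ∈ Set.Icc 0 T, ∀ y, W₂ s y ≤ C * (1 + |y|)) :
    ∃ R K : ℝ, 0 ≤ R ∧ 0 ≤ K ∧ ∀ n : ℝ, 2 ≤ n → ∀ s ∈ Set.Icc 0 T, ∀ y, ∀ s' ∈ Set.Icc 0 T, ∀ y',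
      0 ≤ W₁ s y + W₂ s' y' - n / 2 * ((s - s') ^ 2 + (y - y') ^ 2) →
      |y| ≤ R ∧ |y'| ≤ R ∧ n * ((s - s') ^ 2 + (y - y') ^ 2) ≤ K := by
  obtain ⟨R₁, hR₁0, hR₁⟩ := exists_quad_dominates hδ (2 * C) (2 * C + C ^ 2)
  obtain ⟨R₂, hR₂0, hR₂⟩ := exists_quad_dominates one_pos C (2 * C + 2 * C * R₁)
  refine ⟨R₁ + R₂, 2 * (2 * C + 2 * C * R₁ + C * R₂), by positivity, by positivity, ?_⟩
  intro n hn s hs y s' hs' y' h0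
  have hy' : |y'| ≤ |y| + |y - y'| := by
    have := abs_sub_abs_le_abs_sub y' y
    rw [abs_sub_comm y' y] at this
    linarith
  have hsum : n / 2 * ((s - s') ^ 2 + (y - y') ^ 2) + δ * y ^ 2 ≤
      2 * C + 2 * C * |y| + C * |y - y'| := by
    nlinarith [h₁ s hs y, h₂ s' hs' y', mul_le_mul_of_nonneg_left hy' hC]
  have hquad : (y - y') ^ 2 ≤ n / 2 * ((s - s') ^ 2 + (y - y') ^ 2) := by
    nlinarith [sq_nonneg (s - s'), sq_nonneg (y - y')]
  have hy : |y| ≤ R₁ := by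
    by_contra hcon
    have := hR₁ y (not_le.1 hcon)
    have h5 : |y - y'| ^ 2 = (y - y') ^ 2 := sq_abs _
    nlinarith [sq_nonneg (|y - y'| - C / 2), sq_nonneg C]
  have hd : |y - y'| ≤ R₂ := by
    by_contra hcon
    have := hR₂ (y - y') (not_le.1 hcon)
    nlinarith [mul_nonneg hδ.le (sq_nonneg y), mul_le_mul_of_nonneg_left hy hC]
  refine ⟨by linarith, by linarith, ?_⟩
  nlinarith [mul_nonneg hδ.le (sq_nonneg y), mul_le_mul_of_nonneg_left hy hC,
    mul_le_mul_of_nonneg_left hd hC]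

theorem usc_doubling {T : ℝ} {W₁ W₂ : ℝ → ℝ → ℝ} (hW₁ : Admissible T W₁)
    (hW₂ : Admissible T W₂) :
    UpperSemicontinuousOn (fun p : (ℝ × ℝ) × ℝ × ℝ => W₁ p.1.1 p.1.2 + W₂ p.2.1 p.2.2)
      (dblDom T) := by
  have h1 : UpperSemicontinuousOn (fun p : (ℝ × ℝ) × ℝ × ℝ => W₁ p.1.1 p.1.2) (dblDom T) :=
    hW₁.usc.comp (g := fun p : (ℝ × ℝ) × ℝ × ℝ => p.1) (by fun_prop) (fun p hp => hp.1)
  have h2 : UpperSemicontinuousOn (fun p : (ℝ × ℝ) × ℝ × ℝ => W₂ p.2.1 p.2.2) (dblDom T) :=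
    hW₂.usc.comp (g := fun p : (ℝ × ℝ) × ℝ × ℝ => p.2) (by fun_prop) (fun p hp => hp.2)
  exact h1.add h2

/-- If `W₁ + W₂` is positive somewhere on the diagonal but nonpositive on the diagonal at the
terminal time, then for a large penalization the doubled function attains its maximum, at a pair of
points that are close to each other and both before the terminal time. -/
theorem exists_doubling_max {T : ℝ} {W₁ W₂ : ℝ → ℝ → ℝ} (hW₁ : Admissible T W₁)
    (hW₂ : Admissible T W₂) {C δ : ℝ} (hδ : 0 < δ) (hC : 0 ≤ C)
    (h₁ : ∀ s ∈ Set.Icc 0 T, ∀ y, W₁ s y ≤ C * (1 + |y|) - δ * y ^ 2)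
    (h₂ : ∀ s ∈ Set.Icc 0 T, ∀ y, W₂ s y ≤ C * (1 + |y|))
    (hterm : ∀ y, W₁ T y + W₂ T y ≤ 0) {t₀ x₀ : ℝ} (ht₀ : t₀ ∈ Set.Icc 0 T)
    (hpos : 0 < W₁ t₀ x₀ + W₂ t₀ x₀) {r : ℝ} (hr : 0 < r) :
    ∃ n > 0, ∃ s₁ ∈ Set.Ico 0 T, ∃ s₂ ∈ Set.Ico 0 T, ∃ y₁ y₂ : ℝ,
      |s₁ - s₂| < r ∧ |y₁ - y₂| < r ∧
      ∀ s ∈ Set.Icc 0 T, ∀ y, ∀ s' ∈ Set.Icc 0 T, ∀ y',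
        W₁ s y + W₂ s' y' - n / 2 * ((s - s') ^ 2 + (y - y') ^ 2) ≤
          W₁ s₁ y₁ + W₂ s₂ y₂ - n / 2 * ((s₁ - s₂) ^ 2 + (y₁ - y₂) ^ 2) := by
  obtain ⟨R, K, hR, hK, hRK⟩ := doubling_bounds hδ hC h₁ h₂
  set m := W₁ t₀ x₀ + W₂ t₀ x₀ with hm
  have husc := usc_doubling hW₁ hW₂
  let Q : Set ((ℝ × ℝ) × ℝ × ℝ) :=
    (Set.Icc 0 T ×ˢ Set.Icc (-R) R) ×ˢ (Set.Icc 0 T ×ˢ Set.Icc (-R) R)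
  have hQc : IsCompact Q :=
    (isCompact_Icc.prod isCompact_Icc).prod (isCompact_Icc.prod isCompact_Icc)
  have hQ : Q ⊆ dblDom T := fun p hp => ⟨⟨hp.1.1, trivial⟩, ⟨hp.2.1, trivial⟩⟩
  let E : Set ((ℝ × ℝ) × ℝ × ℝ) :=
    (Q ∩ (fun p => W₁ p.1.1 p.1.2 + W₂ p.2.1 p.2.2) ⁻¹' Set.Ici m) ∩ {p | p.1.1 = T ∨ p.2.1 = T}
  have hE : IsCompact E := by
    refine ((husc.mono hQ).isCompact_inter_preimage_Ici hQc m).inter_right ?_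
    exact (isClosed_eq (by fun_prop) continuous_const).union
      (isClosed_eq (by fun_prop) continuous_const)
  -- Pairs with value at least `m` that involve the terminal time stay away from the diagonal.
  obtain ⟨ρ, hρ, hρE⟩ : ∃ ρ > 0, ∀ p ∈ E, ρ ≤ (p.1.1 - p.2.1) ^ 2 + (p.1.2 - p.2.2) ^ 2 := by
    rcases E.eq_empty_or_nonempty with hem | hne
    · exact ⟨1, one_pos, fun p hp => by simp [hem] at hp⟩
    · obtain ⟨p, hp, hmin⟩ := hE.exists_isMinOn hne
        (f := fun p => (p.1.1 - p.2.1) ^ 2 + (p.1.2 - p.2.2) ^ 2) (by fun_prop)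
      refine ⟨_, ?_, fun q hq => hmin hq⟩
      by_contra hcon
      have e1 : (p.1.1 - p.2.1) ^ 2 = 0 := by
        nlinarith [sq_nonneg (p.1.1 - p.2.1), sq_nonneg (p.1.2 - p.2.2)]
      have e2 : (p.1.2 - p.2.2) ^ 2 = 0 := by
        nlinarith [sq_nonneg (p.1.1 - p.2.1), sq_nonneg (p.1.2 - p.2.2)]
      have e1' : p.1.1 = p.2.1 := sub_eq_zero.1 (pow_eq_zero_iff two_ne_zero |>.1 e1)
      have e2' : p.1.2 = p.2.2 := sub_eq_zero.1 (pow_eq_zero_iff two_ne_zero |>.1 e2)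
      have hT' : p.2.1 = T := by
        rcases hp.2 with h | h
        · rw [← e1']; exact h
        · exact h
      have hge : m ≤ W₁ p.1.1 p.1.2 + W₂ p.2.1 p.2.2 := hp.1.2
      rw [e1', e2', hT'] at hge
      linarith [hterm p.2.2]
  set ρ' := min ρ (r ^ 2) with hρ'
  have hρ'0 : 0 < ρ' := lt_min hρ (by positivity)
  set n := max 2 ((K + 1) / ρ') with hn
  have hn2 : 2 ≤ n := le_max_left _ _
  have hn0 : 0 < n := by linarith
  have hnK : K < n * ρ' := by
    have := (div_le_iff₀ hρ'0).1 (le_max_right 2 ((K + 1) / ρ'))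
    linarith
  let Φ : (ℝ × ℝ) × ℝ × ℝ → ℝ := fun p => W₁ p.1.1 p.1.2 + W₂ p.2.1 p.2.2 -
    n / 2 * ((p.1.1 - p.2.1) ^ 2 + (p.1.2 - p.2.2) ^ 2)
  have hΦ : UpperSemicontinuousOn Φ Q := by
    have h3 : Φ = fun p => (W₁ p.1.1 p.1.2 + W₂ p.2.1 p.2.2) +
        (-(n / 2 * ((p.1.1 - p.2.1) ^ 2 + (p.1.2 - p.2.2) ^ 2))) := by
      funext p; simp only [Φ]; ring
    rw [h3]
    exact (husc.mono hQ).add (ContinuousOn.upperSemicontinuousOn (by fun_prop))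
  have hΦ0 : Φ ((t₀, x₀), t₀, x₀) = m := by simp [Φ, hm]
  have hQmem (p : (ℝ × ℝ) × ℝ × ℝ) (hp : p ∈ dblDom T) (h0 : 0 ≤ Φ p) : p ∈ Q := by
    have := hRK n hn2 p.1.1 hp.1.1 p.1.2 p.2.1 hp.2.1 p.2.2 h0
    exact ⟨⟨hp.1.1, abs_le.1 this.1⟩, hp.2.1, abs_le.1 this.2.1⟩
  have h0Q : ((t₀, x₀), t₀, x₀) ∈ Q :=
    hQmem _ ⟨⟨ht₀, trivial⟩, ht₀, trivial⟩ (by rw [hΦ0]; exact hpos.le)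
  obtain ⟨⟨⟨s₁, y₁⟩, s₂, y₂⟩, hmem, hmax⟩ := hΦ.exists_isMaxOn ⟨_, h0Q⟩ hQc
  have hge : m ≤ Φ ((s₁, y₁), s₂, y₂) := by rw [← hΦ0]; exact hmax h0Q
  have hs₁ : s₁ ∈ Set.Icc 0 T := hmem.1.1
  have hs₂ : s₂ ∈ Set.Icc 0 T := hmem.2.1
  have hnn : 0 ≤ n / 2 * ((s₁ - s₂) ^ 2 + (y₁ - y₂) ^ 2) := by positivity
  have hdist : (s₁ - s₂) ^ 2 + (y₁ - y₂) ^ 2 < ρ' := by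
    have := (hRK n hn2 s₁ hs₁ y₁ s₂ hs₂ y₂ (hpos.le.trans hge)).2.2
    exact lt_of_mul_lt_mul_left (this.trans_lt hnK) hn0.le
  have hnotE : ((s₁, y₁), s₂, y₂) ∉ E := fun h =>
    absurd (hρE _ h) (not_le.2 (hdist.trans_le (min_le_left _ _)))
  have hvalue : m ≤ W₁ s₁ y₁ + W₂ s₂ y₂ := by
    simp only [Φ] at hge
    linarith
  have hs₁T : s₁ < T := lt_of_le_of_ne hs₁.2 fun h => hnotE ⟨⟨hmem, hvalue⟩, Or.inl h⟩
  have hs₂T : s₂ < T := lt_of_le_of_ne hs₂.2 fun h => hnotE ⟨⟨hmem, hvalue⟩, Or.inr h⟩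
  have hr2 : ρ' ≤ r ^ 2 := min_le_right _ _
  refine ⟨n, hn0, s₁, ⟨hs₁.1, hs₁T⟩, s₂, ⟨hs₂.1, hs₂T⟩, y₁, y₂, ?_, ?_, ?_⟩
  · exact abs_lt_of_sq_lt_sq (by nlinarith [sq_nonneg (y₁ - y₂)]) hr.le
  · exact abs_lt_of_sq_lt_sq (by nlinarith [sq_nonneg (s₁ - s₂)]) hr.le
  · intro s hs y s' hs' y'
    by_cases h0 : 0 ≤ Φ ((s, y), s', y')
    · exact hmax (hQmem ((s, y), s', y') ⟨⟨hs, trivial⟩, hs', trivial⟩ h0)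
    · exact (not_le.1 h0).le.trans (hpos.le.trans hge)

/-- **Proposition 3.5** (partial comparison principle).
Under the standing assumptions, if `ε ∈ [0,ε₀]`, `ε' ∈ (ε,ε₀]`, `U` is an upper
semicontinuous viscosity subsolution of (Eq`_ε`) with linear growth, `V` is a lower
semicontinuous viscosity supersolution of (Eq`_{ε'}`) with linear growth, and
`U(T,·) ≤ V(T,·)`, then `U ≤ V` on `[0,T] × ℝ`. -/
theorem partial_comparison (S : Standing) (hS : S.Hyp)
    (ε ε' : ℝ) (hε : ε ∈ Set.Icc (0 : ℝ) S.eps0) (hε' : ε' ∈ Set.Ioc ε S.eps0)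
    (U V : ℝ → ℝ → ℝ)
    (hU_usc : UpperSemicontinuousOn (fun p : ℝ × ℝ => U p.1 p.2) (Set.Icc 0 S.T ×ˢ Set.univ))
    (hU_growth : LinGrowth S.T U)
    (hU_sub : IsSubsol S ε U)
    (hV_lsc : LowerSemicontinuousOn (fun p : ℝ × ℝ => V p.1 p.2) (Set.Icc 0 S.T ×ˢ Set.univ))
    (hV_growth : LinGrowth S.T V)
    (hV_super : IsSupersol S ε' V)
    (hTerm : ∀ x : ℝ, U S.T x ≤ V S.T x) :
    ∀ t ∈ Set.Icc (0 : ℝ) S.T, ∀ x : ℝ, U t x ≤ V t x := by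
  intro t₀ ht₀ x₀
  by_contra! hcon
  have hT := S.T_pos
  obtain ⟨CU, hCU⟩ := hU_growth
  obtain ⟨CV, hCV⟩ := hV_growth
  set gap := U t₀ x₀ - V t₀ x₀ with hgap
  have hgap0 : 0 < gap := by rw [hgap]; linarith
  -- `η` and `δ` are small enough that `U - η (T - t) - δ x² - V` stays positive at `(t₀, x₀)`;
  -- `η` makes the subsolution inequality strict, and `δ` makes the supremum attained.
  set η := gap / (4 * S.T) with hη
  have hη0 : 0 < η := by positivity
  have hηT : η * S.T = gap / 4 := by rw [hη]; field_simp
  obtain ⟨r, hr, hr_gap⟩ := exists_gap hS hε.1 hε'.1 hε'.2 hη0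
  -- The term `δ x²` shifts the second derivative by `2 δ`, which has to stay below the gap `r`.
  set δ := min (r / 4) (gap / (4 * (1 + x₀ ^ 2))) with hδ
  have hδ0 : 0 < δ := lt_min (by positivity) (by positivity)
  have hδr : |2 * δ| < r := by
    rw [abs_of_pos (by positivity)]
    linarith [min_le_left (r / 4) (gap / (4 * (1 + x₀ ^ 2)))]
  have hδx : δ * x₀ ^ 2 ≤ gap / 4 := by
    have h1 : δ * (4 * (1 + x₀ ^ 2)) ≤ gap :=
      (le_div_iff₀ (by positivity)).1 (min_le_right (r / 4) (gap / (4 * (1 + x₀ ^ 2))))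
    nlinarith
  set W₁ : ℝ → ℝ → ℝ := fun t x => U t x - η * (S.T - t) - δ * x ^ 2 with hW₁
  set W₂ : ℝ → ℝ → ℝ := fun t x => -V t x with hW₂
  set C := max 0 (max CU CV) with hC
  have hC0 : 0 ≤ C := le_max_left _ _
  have hCUC : CU ≤ C := (le_max_left _ _).trans (le_max_right _ _)
  have hCVC : CV ≤ C := (le_max_right _ _).trans (le_max_right _ _)
  have g₁ : ∀ s ∈ Set.Icc 0 S.T, ∀ y, W₁ s y ≤ C * (1 + |y|) - δ * y ^ 2 := by
    intro s hs y
    have h1 := (le_abs_self _).trans (hCU s hs y)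
    have h2 : CU * (1 + |y|) ≤ C * (1 + |y|) := by gcongr
    have h3 : 0 ≤ η * (S.T - s) := mul_nonneg hη0.le (by linarith [hs.2])
    simp only [hW₁]
    linarith
  have g₂ : ∀ s ∈ Set.Icc 0 S.T, ∀ y, W₂ s y ≤ C * (1 + |y|) := by
    intro s hs y
    have h1 := (neg_le_abs _).trans (hCV s hs y)
    have h2 : CV * (1 + |y|) ≤ C * (1 + |y|) := by gcongr
    simp only [hW₂]
    linarith
  have hA₁ : Admissible S.T W₁ := by
    refine ⟨?_, C, fun s hs y => (g₁ s hs y).trans ?_⟩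
    · have h3 : (fun p : ℝ × ℝ => W₁ p.1 p.2) = fun p : ℝ × ℝ =>
          U p.1 p.2 + (-(η * (S.T - p.1)) - δ * p.2 ^ 2) := by
        funext p; simp only [hW₁]; ring
      rw [h3]
      exact hU_usc.add (ContinuousOn.upperSemicontinuousOn (by fun_prop))
    · linarith [mul_nonneg hδ0.le (sq_nonneg y)]
  have hA₂ : Admissible S.T W₂ := by
    refine ⟨fun p hp v hv => ?_, C, g₂⟩
    filter_upwards [hV_lsc p hp (-v) (by simp only [hW₂] at hv; linarith)] with q hq
    simp only [hW₂]
    linarith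
  have hterm : ∀ y, W₁ S.T y + W₂ S.T y ≤ 0 := by
    intro y
    simp only [hW₁, hW₂]
    nlinarith [hTerm y, mul_nonneg hδ0.le (sq_nonneg y)]
  have hpos : 0 < W₁ t₀ x₀ + W₂ t₀ x₀ := by
    have : η * (S.T - t₀) ≤ η * S.T := mul_le_mul_of_nonneg_left (by linarith [ht₀.1]) hη0.le
    simp only [hW₁, hW₂]
    linarith
  obtain ⟨n, hn, s₁, hs₁, s₂, hs₂, y₁, y₂, hds, hdy, hmax⟩ :=
    exists_doubling_max hA₁ hA₂ hδ0 hC0 g₁ g₂ hterm ht₀ hpos hr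
  -- A jet `(a, q)` of `W₁` is a jet `(a - η, q + 2 δ)` of `U`, one of `W₂` is minus a jet of `V`.
  have hc₁ : Continuous fun p : ℝ × ℝ × ℝ × ℝ => (p.1, p.2.1, p.2.2.1 - η, p.2.2.2 + 2 * δ) := by
    fun_prop
  have hc₂ : Continuous fun p : ℝ × ℝ × ℝ × ℝ => (p.1, p.2.1, -p.2.2.1, -p.2.2.2) := by
    fun_prop
  obtain ⟨κ, hκ₁, hκ₂⟩ := exists_common_curvature hT hA₁ hA₂ hn hs₁ hs₂ hmax
    ((isClosed_subSet hS ε).preimage hc₁) ((isClosed_superSet hS ε').preimage hc₂)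
    (fun s y a q hs h => mem_subSet ⟨hs.1, hs.2.le⟩ (h.ham_nonpos hU_sub hs))
    (fun s y a q hs h => mem_superSet (hε.1.trans_lt hε'.1) ⟨hs.1, hs.2.le⟩
      (h.ham_nonneg hV_super hs))
  have e : -(n * (s₂ - s₁)) = n * (s₁ - s₂) := by ring
  simp only [Set.mem_preimage, neg_neg, e] at hκ₁ hκ₂
  exact hr_gap s₁ y₁ s₂ y₂ _ _ κ hds hdy (by simpa using hδr) hκ₁ hκ₂
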